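/- Let {β_k} and {γ_k} be nonnegative sequences with γ_k = 1/(k+1)^ε for some ε ∈ (0,1], Σ_{k=0}^∞ γ_k β_k < ∞, and |β_{k+1} − β_k| ≤ M γ_k for all k and some constant M > 0. Then lim_{k→∞} β_k = 0. -/

import Mathlib

open Filter Topology

/-- A nonnegative sequence whose product with a non-summable nonnegative sequence `γ` is summable
tends to zero, provided its successive differences are bounded by a multiple of `γ`. -/
theorem tendsto_zero_of_summable_mul_of_abs_sub_le {β γ : ℕ → ℝ} {M : ℝ} (hM : 0 < M)
    (hβ : ∀ k, 0 ≤ β k) (hγ : ∀ k, 0 ≤ γ k) (hγsum : ¬ Summable γ)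
    (hsum : Summable fun k => γ k * β k)
    (hdiff : ∀ k, |β (k + 1) - β k| ≤ M * γ k) :
    Tendsto β atTop (𝓝 0) := by
  refine tendsto_order.2 ⟨fun a ha => .of_forall fun k => ha.trans_le (hβ k), fun δ hδ => ?_⟩
  have htail := tendsto_sum_nat_add fun k => γ k * β k
  filter_upwards [htail.eventually_lt_const (show 0 < δ ^ 2 / (4 * M) by positivity)] with k hk
  by_contra! hkδ
  have hlower : ∀ n, δ / 2 < β (n + k) := by
    intro n
    induction n using Nat.strong_induction_on with
    | _ n ih =>
      have htele : β k - β (n + k) ≤ M * ∑ i ∈ Finset.range n, γ (i + k) := by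
        have h := Finset.sum_range_sub' (fun i => β (i + k)) n
        simp only [zero_add] at h
        rw [← h, Finset.mul_sum]
        refine Finset.sum_le_sum fun i _ => ?_
        have h := (abs_le.1 (hdiff (i + k))).1
        rw [add_right_comm] at h
        linarith
      have hweight : δ / 2 * ∑ i ∈ Finset.range n, γ (i + k)
          ≤ ∑ i ∈ Finset.range n, γ (i + k) * β (i + k) := by
        rw [Finset.mul_sum]
        refine Finset.sum_le_sum fun i hi => ?_
        rw [mul_comm]
        exact mul_le_mul_of_nonneg_left (ih i (Finset.mem_range.1 hi)).le (hγ _)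
      have hpartial := ((summable_nat_add_iff k).2 hsum).sum_le_tsum (Finset.range n)
        fun i _ => mul_nonneg (hγ (i + k)) (hβ (i + k))
      have hsmall := (hweight.trans hpartial).trans_lt hk
      rw [lt_div_iff₀ (by positivity)] at hsmall
      have : M * ∑ i ∈ Finset.range n, γ (i + k) < δ / 2 := by
        refine lt_of_mul_lt_mul_left (a := 2 * δ) ?_ (by positivity)
        linarith
      linarith
  refine hγsum ((summable_nat_add_iff k).1 ?_)
  refine .of_nonneg_of_le (fun n => hγ (n + k)) (fun n => ?_)
    (((summable_nat_add_iff k).2 hsum).mul_left (2 / δ))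
  calc γ (n + k) = 2 / δ * (γ (n + k) * (δ / 2)) := by field_simp
    _ ≤ 2 / δ * (γ (n + k) * β (n + k)) := by
      gcongr
      · exact hγ _
      · exact (hlower n).le

theorem stmt4 (β γ : ℕ → ℝ) (ε M : ℝ) (hε : 0 < ε) (hε1 : ε ≤ 1)
    (hβ : ∀ k, 0 ≤ β k)
    (hγ : ∀ k : ℕ, γ k = 1 / ((k : ℝ) + 1) ^ ε)
    (hsum : Summable (fun k => γ k * β k))
    (hM : 0 < M)
    (hdiff : ∀ k, |β (k + 1) - β k| ≤ M * γ k) :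
    Tendsto β atTop (𝓝 0) := by
  refine tendsto_zero_of_summable_mul_of_abs_sub_le hM hβ (fun k => ?_) (fun h => ?_) hsum hdiff
  · rw [hγ]
    positivity
  · have hshift : Summable fun k : ℕ => 1 / ((k + 1 : ℕ) : ℝ) ^ ε := by
      simpa [funext hγ] using h
    have hp := Real.summable_one_div_nat_rpow.1
      ((summable_nat_add_iff (f := fun k : ℕ => 1 / (k : ℝ) ^ ε) 1).1 hshift)
    exact hp.not_ge hε1
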